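/- arXiv:2007.03933 — 7 statements merged into one kernel-verified Lean document; each statement's English description precedes it below -/
import Mathlib

section
/- Let H be a 2-vertex-connected undirected graph with a DFS tree T rooted at r. If {v,e} is a vertex-edge cut-pair of H such that e is an edge of T, then either both endpoints of e are descendants of v in T, or both endpoints of e are ancestors of v in T. -/
/-- A DFS tree of the graph `H`, rooted at `r`, given by a parent function:
it is a spanning tree (every vertex reaches the root by iterating the parent
function, and each non-root vertex is adjacent to its parent), and every edge
of `H` joins a vertex to one of its ancestors. -/
structure DFSTree {V : Type*} (H : SimpleGraph V) (r : V) where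
  par : V → V
  par_root : par r = r
  reaches_root : ∀ v : V, ∃ n : ℕ, par^[n] v = r
  par_adj : ∀ v : V, v ≠ r → H.Adj v (par v)
  edge_anc : ∀ x y : V, H.Adj x y → (∃ n : ℕ, par^[n] x = y) ∨ (∃ n : ℕ, par^[n] y = x)

namespace DFSTree

variable {V : Type*} {H : SimpleGraph V} {r : V} (T : DFSTree H r)

/-- `a` is an ancestor of `b` (every vertex is an ancestor of itself). -/
def Anc (a b : V) : Prop := ∃ n : ℕ, T.par^[n] b = a

/-- `a` is a proper ancestor of `b`. -/
def PAnc (a b : V) : Prop := T.Anc a b ∧ a ≠ b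

/-- `(x,y)` is a back-edge: an edge of `H` from `x` to an ancestor `y` of `x`
which is not the tree edge from `x` to its parent. -/
def BackEdge (x y : V) : Prop := H.Adj x y ∧ T.Anc y x ∧ T.par x ≠ y

/-- The set of descendants of `v` joined by a back-edge to a proper ancestor of `v`. -/
def MSet (v : V) : Set V := {x | T.Anc v x ∧ ∃ y, T.PAnc y v ∧ T.BackEdge x y}

/-- `m = M(v)`: `m` is the nearest common ancestor of all descendants of `v`
joined by a back-edge to a proper ancestor of `v`. -/
def IsM (v m : V) : Prop :=
  (∀ x ∈ T.MSet v, T.Anc m x) ∧ ∀ m' : V, (∀ x ∈ T.MSet v, T.Anc m' x) → T.Anc m' m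

/-- The set of descendants of `v` joined by a back-edge to a proper ancestor of `p(v)`. -/
def MpSet (v : V) : Set V := {x | T.Anc v x ∧ ∃ y, T.PAnc y (T.par v) ∧ T.BackEdge x y}

/-- `m = M_p(v)`: `m` is the nearest common ancestor of all descendants of `v`
joined by a back-edge to a proper ancestor of `p(v)`. -/
def IsMp (v m : V) : Prop :=
  (∀ x ∈ T.MpSet v, T.Anc m x) ∧ ∀ m' : V, (∀ x ∈ T.MpSet v, T.Anc m' x) → T.Anc m' m

/-- `h = high(v)`: `h` is the deepest proper ancestor of `v` joined by a
back-edge to a descendant of `v`. -/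
def IsHigh (v h : V) : Prop :=
  T.PAnc h v ∧ (∃ x, T.Anc v x ∧ T.BackEdge x h) ∧
    ∀ h' : V, T.PAnc h' v → (∃ x, T.Anc v x ∧ T.BackEdge x h') → T.Anc h' h

/-- `h = high_p(v)`: `h` is the deepest proper ancestor of `p(v)` joined by a
back-edge to a descendant of `v`. -/
def IsHighP (v h : V) : Prop :=
  T.PAnc h (T.par v) ∧ (∃ x, T.Anc v x ∧ T.BackEdge x h) ∧
    ∀ h' : V, T.PAnc h' (T.par v) → (∃ x, T.Anc v x ∧ T.BackEdge x h') → T.Anc h' h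

/-- `l = low(v)`: `l` is the proper ancestor of `v` nearest to the root joined
by a back-edge to a descendant of `v`. -/
def IsLow (v l : V) : Prop :=
  T.PAnc l v ∧ (∃ x, T.Anc v x ∧ T.BackEdge x l) ∧
    ∀ l' : V, T.PAnc l' v → (∃ x, T.Anc v x ∧ T.BackEdge x l') → T.Anc l l'

end DFSTree

/-- `{v, e}` is a vertex-edge cut-pair of `H`: `e` is an edge of `H` and deleting
both `v` (with its incident edges) and `e` disconnects `H`. -/
def VECutPair {V : Type*} (H : SimpleGraph V) (v : V) (e : Sym2 V) : Prop :=
  e ∈ H.edgeSet ∧ ¬ ((H.deleteEdges {e}).induce {u | u ≠ v}).Connected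

/-- `{e, e'}` is a cut-pair of `H`: `e` and `e'` are distinct edges of `H` whose
deletion disconnects `H`. -/
def ECutPair {V : Type*} (H : SimpleGraph V) (e e' : Sym2 V) : Prop :=
  e ∈ H.edgeSet ∧ e' ∈ H.edgeSet ∧ e ≠ e' ∧ ¬ (H.deleteEdges {e, e'}).Connected

/-- An undirected graph is 2-edge-connected if it is connected and has no bridge. -/
def TwoEdgeConnected {W : Type*} (G : SimpleGraph W) : Prop :=
  G.Connected ∧ ∀ e ∈ G.edgeSet, ¬ G.IsBridge e

/-- An undirected graph is 2-vertex-connected if it has at least three vertices,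
is connected, and deleting any single vertex leaves it connected. -/
def TwoVertexConnected {W : Type*} (G : SimpleGraph W) : Prop :=
  3 ≤ Nat.card W ∧ G.Connected ∧ ∀ v : W, (G.induce {u | u ≠ v}).Connected



namespace DFSTree

theorem anc_trans {V : Type*} {H : SimpleGraph V} {r : V} (T : DFSTree H r) {a b c : V}
    (h1 : T.Anc a b) (h2 : T.Anc b c) : T.Anc a c := by
  obtain ⟨n, rfl⟩ := h1
  obtain ⟨m, rfl⟩ := h2
  exact ⟨n + m, Function.iterate_add_apply _ _ _ _⟩

theorem anc_refl {V : Type*} {H : SimpleGraph V} {r : V} (T : DFSTree H r) (a : V) :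
    T.Anc a a := ⟨0, rfl⟩

theorem anc_par {V : Type*} {H : SimpleGraph V} {r : V} (T : DFSTree H r) (a : V) :
    T.Anc (T.par a) a := ⟨1, rfl⟩

theorem anc_step {V : Type*} {H : SimpleGraph V} {r : V} (T : DFSTree H r) {a b : V}
    (h : T.Anc a b) (hne : a ≠ b) : T.Anc a (T.par b) := by
  obtain ⟨n, hn⟩ := h
  cases n with
  | zero => exact absurd hn.symm hne
  | succ m => exact ⟨m, by rw [← hn, Function.iterate_succ_apply]⟩

theorem root_of_cycle {V : Type*} {H : SimpleGraph V} {r : V} (T : DFSTree H r) {u : V}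
    (h : T.Anc u (T.par u)) : u = r := by
  obtain ⟨n, hn⟩ := h
  rw [← Function.iterate_succ_apply] at hn
  obtain ⟨k, hk⟩ := T.reaches_root u
  have h1 : T.par^[(n + 1) * k] u = u := by
    rw [Function.iterate_mul]
    exact Function.iterate_fixed hn k
  have h2 : T.par^[(n + 1) * k] u = r := by
    have : (n + 1) * k = n * k + k := by ring
    rw [this, Function.iterate_add_apply, hk]
    exact Function.iterate_fixed T.par_root _
  rw [← h1, h2]

/-- The two ancestors of a vertex are comparable. -/
theorem anc_total {V : Type*} {H : SimpleGraph V} {r : V} (T : DFSTree H r) {a b x : V}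
    (h1 : T.Anc a x) (h2 : T.Anc b x) : T.Anc a b ∨ T.Anc b a := by
  obtain ⟨n, rfl⟩ := h1
  obtain ⟨m, rfl⟩ := h2
  rcases le_total n m with h | h
  · right
    exact ⟨m - n, by rw [← Function.iterate_add_apply, Nat.sub_add_cancel h]⟩
  · left
    exact ⟨n - m, by rw [← Function.iterate_add_apply, Nat.sub_add_cancel h]⟩

theorem climb {V : Type*} {H : SimpleGraph V} {r : V} (T : DFSTree H r) (v u : V) (hu : u ≠ r)
    (n : ℕ) : ∀ (a b : V), T.par^[n] b = a →
    (∀ w, T.Anc a w → T.Anc w b → w ≠ v) →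
    (∀ w, T.Anc a w → T.Anc w b → w ≠ a → w ≠ u) → ∀ (ha : a ≠ v) (hb : b ≠ v),
    ((H.deleteEdges {s(u, T.par u)}).induce {u | u ≠ v}).Reachable ⟨b, hb⟩ ⟨a, ha⟩ := by
  induction n with
  | zero =>
    intro a b h _ _ ha hb
    have : b = a := h
    subst this
    exact SimpleGraph.Reachable.refl _
  | succ n ih =>
    intro a b h hv hw ha hb
    by_cases hab : b = a
    · subst hab
      exact SimpleGraph.Reachable.refl _
    rw [Function.iterate_succ_apply] at h
    have hpa : T.Anc a (T.par b) := ⟨n, h⟩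
    have hbu : b ≠ u := hw b (T.anc_trans hpa (T.anc_par b)) (T.anc_refl b) hab
    have hpv : T.par b ≠ v := hv _ hpa (T.anc_par b)
    have hbr : b ≠ r := by
      rintro rfl
      rw [T.par_root, Function.iterate_fixed T.par_root] at h
      exact hab h
    refine SimpleGraph.Reachable.trans (SimpleGraph.Adj.reachable ?_)
      (ih a (T.par b) h (fun w h1 h2 => hv w h1 (T.anc_trans h2 (T.anc_par b)))
        (fun w h1 h2 => hw w h1 (T.anc_trans h2 (T.anc_par b))) ha hpv)
    simp only [SimpleGraph.comap_adj, SimpleGraph.deleteEdges_adj, Function.Embedding.subtype_apply,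
      Set.mem_singleton_iff]
    refine ⟨T.par_adj b hbr, fun he => ?_⟩
    rw [Sym2.eq_iff] at he
    rcases he with ⟨h1, _⟩ | ⟨h1, h2⟩
    · exact hbu h1
    · apply hu
      apply T.root_of_cycle
      rw [← h1, ← h2]
      exact T.anc_par b

end DFSTree

theorem stmt_7 {V : Type*} [Fintype V] (H : SimpleGraph V) (r : V)
    (T : DFSTree H r) (hH : TwoVertexConnected H) (v u : V) (hu : u ≠ r)
    (hcut : VECutPair H v s(u, T.par u)) :
    (T.Anc v u ∧ T.Anc v (T.par u)) ∨ (T.Anc u v ∧ T.Anc (T.par u) v) := by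
  by_cases huv : T.Anc u v
  · exact Or.inr ⟨huv, T.anc_trans (T.anc_par u) huv⟩
  by_cases hvu : T.Anc v u
  · refine Or.inl ⟨hvu, T.anc_step hvu ?_⟩
    rintro rfl
    exact huv hvu
  exfalso
  apply hcut.2
  have hne : u ≠ v := by rintro rfl; exact huv (T.anc_refl _)
  have hpne : T.par u ≠ v := by rintro rfl; exact hvu (T.anc_par _)
  have hup : u ≠ T.par u := (T.par_adj u hu).ne
  -- key reachability
  have key : ((H.deleteEdges {s(u, T.par u)}).induce {u | u ≠ v}).Reachable
      ⟨u, hne⟩ ⟨T.par u, hpne⟩ := by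
    obtain ⟨p⟩ := (hH.2.2 (T.par u)).preconnected ⟨u, hup⟩ ⟨v, hpne.symm⟩
    obtain ⟨d, -, hd1, hd2⟩ := p.exists_boundary_dart {x | T.Anc u x.1} (T.anc_refl u) huv
    obtain ⟨⟨⟨x, hx⟩, ⟨y, hy⟩⟩, hadj⟩ := d
    change T.Anc u x at hd1
    change ¬ T.Anc u y at hd2
    change H.Adj x y at hadj
    change y ≠ T.par u at hy
    have hyx : T.Anc y x := by
      rcases T.edge_anc x y hadj with h | h
      · exact h
      · exact absurd (T.anc_trans hd1 h) hd2
    have hyu : T.Anc y u := (T.anc_total hyx hd1).resolve_right hd2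
    have hyu' : y ≠ u := by rintro rfl; exact hd2 (T.anc_refl _)
    have hyp : T.Anc y (T.par u) := T.anc_step hyu hyu'
    have hyv : y ≠ v := by rintro rfl; exact hvu hyu
    have hxv : x ≠ v := by rintro rfl; exact huv hd1
    obtain ⟨n, hn⟩ := hd1
    obtain ⟨m, hm⟩ := hyp
    have r1 := T.climb v u hu n u x hn (by rintro w h1 _ rfl; exact huv h1)
      (fun w _ _ h => h) hne hxv
    have r2 := T.climb v u hu m y (T.par u) hm
      (by rintro w _ h2 rfl; exact hvu (T.anc_trans h2 (T.anc_par u)))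
      (by rintro w _ h2 _ rfl; exact hu (T.root_of_cycle h2)) hyv hpne
    refine r1.symm.trans (SimpleGraph.Reachable.trans (SimpleGraph.Adj.reachable ?_) r2.symm)
    simp only [SimpleGraph.comap_adj, SimpleGraph.deleteEdges_adj,
      Function.Embedding.subtype_apply, Set.mem_singleton_iff]
    refine ⟨hadj, fun he => ?_⟩
    rw [Sym2.eq_iff] at he
    rcases he with ⟨_, h1⟩ | ⟨_, h1⟩
    · exact hy h1
    · exact hyu' h1
  have hconn := hH.2.2 v
  haveI := hconn.nonempty
  refine SimpleGraph.Connected.mk ?_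
  intro a b
  obtain ⟨p⟩ := hconn.preconnected a b
  induction p with
  | nil => exact SimpleGraph.Reachable.refl _
  | @cons a c b h _ ih =>
    refine SimpleGraph.Reachable.trans ?_ ih
    obtain ⟨a, ha⟩ := a
    obtain ⟨c, hc⟩ := c
    change H.Adj a c at h
    by_cases he : s(a, c) = s(u, T.par u)
    · rw [Sym2.eq_iff] at he
      rcases he with ⟨rfl, rfl⟩ | ⟨rfl, rfl⟩
      · exact key
      · exact key.symm
    · apply SimpleGraph.Adj.reachable
      simp only [SimpleGraph.comap_adj, SimpleGraph.deleteEdges_adj,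
        Function.Embedding.subtype_apply, Set.mem_singleton_iff]
      exact ⟨h, he⟩
end

section
/- Let H be a 2-vertex-connected undirected graph with a DFS tree T rooted at r, and let u and v be vertices different from r such that v is an ancestor of u and M(v) is a descendant of u. Then M(v) is a descendant of M(u). -/
theorem stmt_8 {V : Type*} [Fintype V] (H : SimpleGraph V) (r : V)
    (T : DFSTree H r) (hH : TwoVertexConnected H) (u v mu mv : V)
    (hu : u ≠ r) (hv : v ≠ r) (hmu : T.IsM u mu) (hmv : T.IsM v mv)
    (hanc : T.Anc v u) (hdesc : T.Anc u mv) :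
    T.Anc mu mv := by
  have fix : ∀ k : ℕ, T.par^[k] r = r := fun k => Function.iterate_fixed T.par_root k
  apply hmv.2
  rintro x ⟨hvx, y, ⟨hyv, hne⟩, hb⟩
  have trans : ∀ a b c : V, T.Anc a b → T.Anc b c → T.Anc a c := by
    rintro a b c ⟨m, hm⟩ ⟨n, hn⟩
    exact ⟨m + n, by rw [Function.iterate_add_apply, hn, hm]⟩
  have hux : T.Anc u x := trans _ _ _ hdesc (hmv.1 x ⟨hvx, y, ⟨hyv, hne⟩, hb⟩)
  refine hmu.1 x ⟨hux, y, ⟨trans _ _ _ hyv hanc, ?_⟩, hb⟩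
  rintro rfl
  obtain ⟨a, ha⟩ := hanc
  obtain ⟨b, hb'⟩ := hyv
  have hper : T.par^[a + b] v = v := by rw [Function.iterate_add_apply, hb', ha]
  have hpos : 0 < b := by
    rcases Nat.eq_zero_or_pos b with h | h
    · subst h
      exact absurd hb'.symm hne
    · exact h
  obtain ⟨n, hn⟩ := T.reaches_root v
  have h1 : T.par^[(a + b) * n] v = v := by
    rw [Function.iterate_mul]
    exact Function.iterate_fixed hper n
  have hle : n ≤ (a + b) * n := Nat.le_mul_of_pos_left n (by omega)
  have h2 : T.par^[(a + b) * n] v = r := by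
    rw [← Nat.sub_add_cancel hle, Function.iterate_add_apply, hn, fix]
  exact hv (h1.symm.trans h2)
end

section
/- Let H be a 2-vertex-connected undirected graph with a DFS tree T rooted at r, and let u and v be vertices with u ≠ r, v ≠ r and p(v) ≠ r, such that v is an ancestor of u and M_p(v) is a descendant of u. Then M_p(v) is a descendant of M(u). -/
theorem stmt_9 {V : Type*} [Fintype V] (H : SimpleGraph V) (r : V)
    (T : DFSTree H r) (hH : TwoVertexConnected H) (u v mu mv : V)
    (hu : u ≠ r) (hv : v ≠ r) (hpv : T.par v ≠ r)
    (hmu : T.IsM u mu) (hmv : T.IsMp v mv)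
    (hanc : T.Anc v u) (hdesc : T.Anc u mv) :
    T.Anc mu mv := by
  have trans : ∀ a b c : V, T.Anc a b → T.Anc b c → T.Anc a c := by
    rintro a b c ⟨n, rfl⟩ ⟨m, rfl⟩
    exact ⟨n + m, Function.iterate_add_apply _ _ _ _⟩
  apply hmv.2
  intro x hx
  apply hmu.1
  have hmx := hmv.1 x hx
  obtain ⟨hvx, y, ⟨hy, hyne⟩, hb⟩ := hx
  refine ⟨trans _ _ _ hdesc hmx, y, ⟨?_, ?_⟩, hb⟩
  · exact trans _ _ _ hy (trans _ _ _ ⟨1, rfl⟩ hanc)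
  · rintro rfl
    obtain ⟨n, hn⟩ := trans _ _ _ hanc hy
    have hper : T.par^[n + 1] v = v := by
      rw [Function.iterate_succ_apply]; exact hn
    obtain ⟨k, hk⟩ := T.reaches_root v
    have h1 : T.par^[(n + 1) * k] v = v := by
      rw [Function.iterate_mul]; exact Function.iterate_fixed hper k
    have h2 : (n + 1) * k = n * k + k := by ring
    rw [h2, Function.iterate_add_apply, hk, Function.iterate_fixed T.par_root] at h1
    exact hv h1.symm
end

section
/- Let H be a 2-vertex-connected undirected graph with a DFS tree T rooted at r, with vertices identified with their DFS numbers. (i) Let {v,(u,p(u))} be a vertex-edge cut-pair of H such that v is a proper ancestor of u, u ≠ r, and high(u) = v, and let c be the child of v that is an ancestor of u. Then either low(u) = v, or low(u) is a proper ancestor of v and u ≤ M_p(c). (ii) Conversely, if c is a proper ancestor of u with c ≠ r and high(u) = p(c), and either low(u) = p(c), or low(u) is a proper ancestor of p(c) and u ≤ M_p(c), then {p(c),(u,p(u))} is a vertex-edge cut-pair of H. -/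
theorem sep_aux {V : Type*} (H : SimpleGraph V) (v : V) (e : Sym2 V) (S : V → Prop)
    (hS : ∀ a b, H.Adj a b → s(a,b) ≠ e → a ≠ v → b ≠ v → S a → S b)
    (s t : V) (hs : s ≠ v) (ht : t ≠ v) (hSs : S s) (hSt : ¬ S t) :
    ¬ ((H.deleteEdges {e}).induce {u | u ≠ v}).Connected := by
  intro hc
  obtain ⟨w⟩ := hc.preconnected ⟨s, hs⟩ ⟨t, ht⟩
  have key : ∀ (x y : {u : V | u ≠ v}),
      ((H.deleteEdges {e}).induce {u | u ≠ v}).Walk x y → S x.1 → S y.1 := by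
    intro x y w
    induction w with
    | nil => exact id
    | @cons a b c h _ ih =>
      intro ha
      apply ih
      have h' : (H.deleteEdges {e}).Adj a.1 b.1 := h
      rw [SimpleGraph.deleteEdges_adj] at h'
      exact hS a.1 b.1 h'.1 (by simpa using h'.2) a.2 b.2 ha
  exact hSt (key _ _ w hSs)

def RR {V : Type*} (H : SimpleGraph V) (v : V) (e : Sym2 V) (a b : V) : Prop :=
  ∃ (ha : a ≠ v) (hb : b ≠ v),
    ((H.deleteEdges {e}).induce {u | u ≠ v}).Reachable ⟨a, ha⟩ ⟨b, hb⟩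

theorem RR.trans {V : Type*} {H : SimpleGraph V} {v : V} {e : Sym2 V} {a b c : V}
    (h : RR H v e a b) (h' : RR H v e b c) : RR H v e a c := by
  obtain ⟨ha, hb, h⟩ := h
  obtain ⟨_, hc, h'⟩ := h'
  exact ⟨ha, hc, h.trans h'⟩

theorem RR.symm {V : Type*} {H : SimpleGraph V} {v : V} {e : Sym2 V} {a b : V}
    (h : RR H v e a b) : RR H v e b a := by
  obtain ⟨ha, hb, h⟩ := h
  exact ⟨hb, ha, h.symm⟩

theorem RR.refl {V : Type*} {H : SimpleGraph V} {v : V} {e : Sym2 V} {a : V}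
    (h : a ≠ v) : RR H v e a a := ⟨h, h, .refl _⟩

theorem RR.adj {V : Type*} {H : SimpleGraph V} {v : V} {e : Sym2 V} {a b : V}
    (ha : a ≠ v) (hb : b ≠ v) (h : H.Adj a b) (he : s(a,b) ≠ e) : RR H v e a b := by
  refine ⟨ha, hb, SimpleGraph.Adj.reachable ?_⟩
  show (H.deleteEdges {e}).Adj a b
  rw [SimpleGraph.deleteEdges_adj]
  exact ⟨h, by simpa using he⟩

theorem conn_aux {V : Type*} (H : SimpleGraph V) (v p q : V)
    (hc : (H.induce {u | u ≠ v}).Connected)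
    (h : p ≠ v → q ≠ v → RR H v s(p,q) p q) :
    ((H.deleteEdges {s(p,q)}).induce {u | u ≠ v}).Connected := by
  have key : ∀ (x y : {u : V | u ≠ v}),
      (H.induce {u | u ≠ v}).Walk x y → RR H v s(p,q) x.1 y.1 := by
    intro x y w
    induction w with
    | @nil a => exact .refl a.2
    | @cons a b c hh _ ih =>
      refine RR.trans ?_ ih
      have h' : H.Adj a.1 b.1 := hh
      by_cases he : s(a.1,b.1) = s(p,q)
      · rw [Sym2.eq_iff] at he
        have h1 := a.2
        have h2 := b.2
        rcases he with ⟨e1, e2⟩ | ⟨e1, e2⟩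
        · rw [e1, e2]; exact h (e1 ▸ h1) (e2 ▸ h2)
        · rw [e1, e2]; exact (h (e2 ▸ h2) (e1 ▸ h1)).symm
      · exact .adj a.2 b.2 h' he
  have := hc.nonempty
  refine ⟨fun x y => ?_⟩
  obtain ⟨w⟩ := hc.preconnected x y
  obtain ⟨_, _, h3⟩ := key x y w
  exact h3

namespace DFSTree
variable {V : Type*} {H : SimpleGraph V} {r : V} (T : DFSTree H r)

theorem anc_refl_s13 (a : V) : T.Anc a a := ⟨0, rfl⟩

theorem anc_par_s13 (a : V) : T.Anc (T.par a) a := ⟨1, rfl⟩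

theorem anc_trans_s13 {a b c : V} (h : T.Anc a b) (h' : T.Anc b c) : T.Anc a c := by
  obtain ⟨n, rfl⟩ := h
  obtain ⟨m, rfl⟩ := h'
  exact ⟨n + m, Function.iterate_add_apply _ _ _ _⟩

theorem anc_step_s13 {a b : V} (h : T.Anc a b) (hn : a ≠ b) : T.Anc a (T.par b) := by
  obtain ⟨n, rfl⟩ := h
  cases n with
  | zero => exact absurd rfl hn
  | succ n => exact ⟨n, rfl⟩

theorem anc_comp {a b x : V} (h : T.Anc a x) (h' : T.Anc b x) : T.Anc a b ∨ T.Anc b a := by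
  obtain ⟨n, rfl⟩ := h
  obtain ⟨m, rfl⟩ := h'
  rcases le_total n m with hh | hh
  · right
    refine ⟨m - n, ?_⟩
    rw [← Function.iterate_add_apply, Nat.sub_add_cancel hh]
  · left
    refine ⟨n - m, ?_⟩
    rw [← Function.iterate_add_apply, Nat.sub_add_cancel hh]

theorem root_anc (a : V) : T.Anc r a := T.reaches_root a

theorem anc_le (num : V → ℕ) (hmono : ∀ a b : V, T.PAnc a b → num a < num b)
    {a b : V} (h : T.Anc a b) : num a ≤ num b := by
  by_cases hh : a = b
  · rw [hh]
  · exact (hmono a b ⟨h, hh⟩).le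

theorem up_path (num : V → ℕ) (hmono : ∀ a b : V, T.PAnc a b → num a < num b)
    (v u : V) (hu : u ≠ r) (a : V) : ∀ (n : ℕ) (b : V), T.par^[n] b = a →
      (∀ w, T.Anc a w → T.Anc w b → w ≠ v ∧ (w = a ∨ w ≠ u)) →
      RR H v s(u, T.par u) b a := by
  intro n
  induction n with
  | zero =>
    intro b hb hw
    have : b = a := hb
    subst this
    exact .refl (hw b (T.anc_refl_s13 b) (T.anc_refl_s13 b)).1
  | succ n ih =>
    intro b hb hw
    by_cases hba : b = a
    · subst hba
      exact .refl (hw b (T.anc_refl_s13 b) (T.anc_refl_s13 b)).1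
    have hb' : T.par^[n] (T.par b) = a := hb
    have hA : T.Anc a (T.par b) := ⟨n, hb'⟩
    have h1 := hw b ⟨n+1, hb⟩ (T.anc_refl_s13 b)
    have h2 := hw (T.par b) hA (T.anc_par_s13 b)
    have hbr : b ≠ r := by
      rintro rfl
      rw [T.par_root] at hA
      have := T.anc_le num hmono hA
      have := hmono a b ⟨hA, Ne.symm hba⟩
      have := T.anc_le num hmono (T.root_anc a)
      omega
    refine RR.trans (RR.adj h1.1 h2.1 (T.par_adj b hbr) ?_)
      (ih _ hb' fun w h3 h4 => hw w h3 (T.anc_trans_s13 h4 (T.anc_par_s13 b)))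
    intro he
    have hbu : b ≠ u := h1.2.resolve_left hba
    rw [Sym2.eq_iff] at he
    rcases he with ⟨e1, _⟩ | ⟨e1, e2⟩
    · exact hbu e1
    · have q1 := hmono _ _ ⟨T.anc_par_s13 b, (T.par_adj b hbr).ne'⟩
      have q2 := hmono _ _ ⟨T.anc_par_s13 u, (T.par_adj u hu).ne'⟩
      rw [e2, e1] at q1
      omega

end DFSTree

theorem stmt_13 {V : Type*} [Fintype V] (H : SimpleGraph V) (r : V)
    (T : DFSTree H r) (hH : TwoVertexConnected H)
    (num : V → ℕ) (hinj : Function.Injective num)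
    (hmono : ∀ a b : V, T.PAnc a b → num a < num b)
    (hconsec : ∀ v a b x : V, T.Anc v a → T.Anc v b →
      num a ≤ num x → num x ≤ num b → T.Anc v x) :
    (∀ v u c lo mpc : V, u ≠ r → T.PAnc v u →
      VECutPair H v s(u, T.par u) → T.IsHigh u v →
      T.par c = v → c ≠ r → T.Anc c u →
      T.IsLow u lo → T.IsMp c mpc →
      (lo = v ∨ (T.PAnc lo v ∧ num u ≤ num mpc))) ∧
    (∀ u c lo mpc : V, u ≠ r → c ≠ r → T.PAnc c u → T.IsHigh u (T.par c) →
      T.IsLow u lo → T.IsMp c mpc →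
      (lo = T.par c ∨ (T.PAnc lo (T.par c) ∧ num u ≤ num mpc)) →
      VECutPair H (T.par c) s(u, T.par u)) := by
  have ple : ∀ {a b : V}, T.Anc a b → num a ≤ num b := fun h => T.anc_le num hmono h
  have parlt : ∀ a, a ≠ r → num (T.par a) < num a := fun a ha =>
    hmono _ _ ⟨T.anc_par_s13 a, (T.par_adj a ha).ne'⟩
  have nne : ∀ {a b : V}, num a < num b → a ≠ b := by
    rintro a b h rfl
    omega
  have asym : ∀ {a b : V}, T.Anc a b → T.Anc b a → a = b := fun h h' =>
    hinj (le_antisymm (ple h) (ple h'))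
  constructor
  · intro v u c lo mpc hur hvu hcut hhigh hcv hcr hcu hlow hmp
    by_cases hlv : lo = v
    · exact Or.inl hlv
    right
    have hlov : T.PAnc lo v := ⟨hhigh.2.2 lo hlow.1 hlow.2.1, hlv⟩
    refine ⟨hlov, ?_⟩
    by_contra hlt
    rw [not_le] at hlt
    obtain ⟨x, hux, hxlo⟩ := hlow.2.1
    have hex : ∃ y ∈ T.MpSet c, ¬ T.Anc u y := by
      by_contra! hall
      have := ple (hmp.2 u hall)
      omega
    obtain ⟨y, ⟨hcy, z, hz, hyz⟩, huy⟩ := hex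
    rw [hcv] at hz
    have hvc : num v < num c := hcv ▸ parlt c hcr
    have hlo1 := hmono _ _ hlov
    have hz1 := hmono _ _ hz
    have hcu' := ple hcu
    apply hcut.2
    refine conn_aux H v u (T.par u) (hH.2.2 v) fun _ hpv => ?_
    have hcneu : c ≠ u := by
      rintro rfl
      exact hpv hcv
    have hcpu : T.Anc c (T.par u) := T.anc_step_s13 hcu hcneu
    have hcpu' := ple hcpu
    have ene : ∀ w t, num t < num v → s(w,t) ≠ s(u, T.par u) := by
      intro w t ht he
      rw [Sym2.eq_iff] at he
      rcases he with ⟨_, e2⟩ | ⟨_, e2⟩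
      · rw [e2] at ht; omega
      · rw [e2] at ht; omega
    have up := T.up_path num hmono v u hur
    -- u to x
    have r1 : RR H v s(u, T.par u) x u := by
      obtain ⟨n, hn⟩ := hux
      refine up u n x hn fun w h1 h2 => ⟨?_, ?_⟩
      · have := ple h1
        exact (nne (by omega)).symm
      · by_cases h : w = u
        · exact Or.inl h
        · exact Or.inr h
    have r2 : RR H v s(u, T.par u) x lo := by
      have := ple hux
      exact .adj (nne (by omega)).symm (nne hlo1) hxlo.1 (ene _ _ hlo1)
    have top : ∀ t, num t < num v → RR H v s(u, T.par u) t r := by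
      intro t ht
      obtain ⟨n, hn⟩ := T.root_anc t
      refine up r n t hn fun w h1 h2 => ?_
      have := ple h2
      exact ⟨nne (by omega), Or.inr (nne (by omega))⟩
    have r3 : RR H v s(u, T.par u) y z := by
      have := ple hcy
      exact .adj (nne (by omega)).symm (nne hz1) hyz.1 (ene _ _ hz1)
    have r4 : RR H v s(u, T.par u) y c := by
      obtain ⟨n, hn⟩ := hcy
      refine up c n y hn fun w h1 h2 => ?_
      have := ple h1
      refine ⟨(nne (by omega)).symm, Or.inr ?_⟩
      rintro rfl
      exact huy h2
    have r5 : RR H v s(u, T.par u) (T.par u) c := by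
      obtain ⟨n, hn⟩ := hcpu
      refine up c n _ hn fun w h1 h2 => ?_
      have := ple h1
      have := ple h2
      have := parlt u hur
      exact ⟨(nne (by omega)).symm, Or.inr (nne (by omega))⟩
    exact r1.symm.trans (r2.trans ((top lo hlo1).trans ((top z hz1).symm.trans
      (r3.symm.trans (r4.trans r5.symm)))))
  · intro u c lo mpc hur hcr hcu hhigh hlow hmp hor
    refine ⟨T.par_adj u hur, ?_⟩
    have hvc := parlt c hcr
    have hcu1 := hmono _ _ hcu
    have hcpu : T.Anc c (T.par u) := T.anc_step_s13 hcu.1 hcu.2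
    -- edges leaving the subtree of u
    have leave : ∀ a b, H.Adj a b → s(a,b) ≠ s(u, T.par u) → T.Anc u a → ¬ T.Anc u b →
        T.PAnc b u ∧ T.BackEdge a b := by
      intro a b hab he hua hub
      have hba : T.Anc b a := by
        rcases T.edge_anc a b hab with h | h
        · exact h
        · exact absurd (T.anc_trans_s13 hua h) hub
      have hbu : T.Anc b u := (T.anc_comp hba hua).resolve_right hub
      refine ⟨⟨hbu, ?_⟩, hab, hba, ?_⟩
      · rintro rfl
        exact hub (T.anc_refl_s13 b)
      · intro hp
        by_cases hau : u = a
        · subst hau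
          exact he (by rw [hp])
        · exact hub (hp ▸ T.anc_step_s13 hua hau)
    rcases hor with hlo | ⟨hlo, hnum⟩
    · refine sep_aux H _ _ (fun a => T.Anc u a) ?_ u c (nne (by omega)).symm
        (nne hvc).symm (T.anc_refl_s13 u) ?_
      · intro a b hab he hav hbv hua
        by_contra hub
        obtain ⟨h1, h2⟩ := leave a b hab he hua hub
        have h3 := hhigh.2.2 b h1 ⟨a, hua, h2⟩
        have h4 := hlow.2.2 b h1 ⟨a, hua, h2⟩
        rw [hlo] at h4
        exact hbv (asym h3 h4)
      · intro h
        have := ple h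
        omega
    · obtain ⟨x, hux, hxlo⟩ := hlow.2.1
      have hxm : x ∈ T.MpSet c := ⟨T.anc_trans_s13 hcu.1 hux, lo, hlo, hxlo⟩
      have hmx := hmp.1 x hxm
      have hum : T.Anc u mpc := hconsec u u x mpc (T.anc_refl_s13 u) hux hnum (ple hmx)
      refine sep_aux H _ _ (fun a => T.Anc c a ∧ ¬ T.Anc u a) ?_ c u (nne hvc).symm
        (nne (by omega)).symm ⟨T.anc_refl_s13 c, ?_⟩ (fun h => h.2 (T.anc_refl_s13 u))
      · rintro a b hab he hav hbv ⟨hca, hua⟩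
        have hub : ¬ T.Anc u b := by
          intro hub
          obtain ⟨h1, h2⟩ := leave b a hab.symm (by rwa [Sym2.eq_swap]) hub hua
          have h3 := ple (hhigh.2.2 a h1 ⟨b, hub, h2⟩)
          have := ple hca
          omega
        refine ⟨?_, hub⟩
        by_contra hcb
        have hba : T.Anc b a := by
          rcases T.edge_anc a b hab with h | h
          · exact h
          · exact absurd (T.anc_trans_s13 hca h) hcb
        have hbc : T.Anc b c := (T.anc_comp hba hca).resolve_right hcb
        have hbc' : b ≠ c := by
          rintro rfl
          exact hcb (T.anc_refl_s13 b)
        have hbp : T.PAnc b (T.par c) := ⟨T.anc_step_s13 hbc hbc', hbv⟩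
        have : T.BackEdge a b := by
          refine ⟨hab, hba, fun hp => ?_⟩
          by_cases hac : c = a
          · subst hac
            exact hbv hp.symm
          · exact hcb (hp ▸ T.anc_step_s13 hca hac)
        exact hua (T.anc_trans_s13 hum (hmp.1 a ⟨hca, b, hbp, this⟩))
      · intro h
        have := ple h
        omega
end

section
/- Let H be a 2-edge-connected undirected graph with a DFS tree T rooted at r. If {e,e'} is a cut-pair of H such that both e and e' are edges of T, then there exists a vertex u such that both e and e' lie on the tree path from u to the root r. -/
theorem aux_cyc {V : Type*} {H : SimpleGraph V} {r : V} (T : DFSTree H r) (u : V) (n : ℕ)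
    (h : T.par^[n+1] u = u) : u = r := by
  obtain ⟨m, hm⟩ := T.reaches_root u
  have hr : ∀ k, T.par^[k] r = r := fun k => Function.iterate_fixed T.par_root k
  have h1 : T.par^[(n+1)*m] u = u := by
    rw [Function.iterate_mul]; exact Function.iterate_fixed h m
  have h2 : (n+1)*m = n*m + m := by ring
  rw [h2, Function.iterate_add_apply, hm, hr] at h1
  exact h1.symm

theorem aux_trans {V : Type*} {H : SimpleGraph V} {r : V} (T : DFSTree H r) {a b c : V}
    (h : T.Anc a b) (h' : T.Anc b c) : T.Anc a c := by
  obtain ⟨n, rfl⟩ := h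
  obtain ⟨m, rfl⟩ := h'
  exact ⟨n + m, Function.iterate_add_apply _ _ _ _⟩

theorem aux_refl {V : Type*} {H : SimpleGraph V} {r : V} (T : DFSTree H r) (a : V) :
    T.Anc a a := ⟨0, rfl⟩

theorem aux_par {V : Type*} {H : SimpleGraph V} {r : V} (T : DFSTree H r) (a : V) :
    T.Anc (T.par a) a := ⟨1, rfl⟩

/-- vertices below neither deleted edge reach the root -/
theorem aux_A {V : Type*} {H : SimpleGraph V} {r : V} (T : DFSTree H r) (u₁ u₂ : V) (n : ℕ) :
    ∀ v, T.par^[n] v = r → ¬ T.Anc u₁ v → ¬ T.Anc u₂ v →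
      (H.deleteEdges {s(u₁, T.par u₁), s(u₂, T.par u₂)}).Reachable v r := by
  induction n with
  | zero => intro v hv _ _; have hv : v = r := hv; rw [hv]
  | succ n ih =>
    intro v hv k1 k2
    by_cases hvr : v = r
    · subst hvr; exact SimpleGraph.Reachable.refl _
    have key : ∀ u, ¬ T.Anc u v → s(v, T.par v) ≠ s(u, T.par u) := by
      intro u hu h
      rcases Sym2.eq_iff.1 h with ⟨h, -⟩ | ⟨-, h⟩
      · exact hu (h ▸ aux_refl T v)
      · exact hu (h ▸ aux_par T v)
    have hadj : (H.deleteEdges {s(u₁, T.par u₁), s(u₂, T.par u₂)}).Adj v (T.par v) := by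
      rw [SimpleGraph.deleteEdges_adj]
      refine ⟨T.par_adj v hvr, ?_⟩
      rintro (h | h)
      · exact key _ k1 h
      · exact key _ k2 h
    exact hadj.reachable.trans (ih _ hv (fun h => k1 (aux_trans T h (aux_par T v)))
      (fun h => k2 (aux_trans T h (aux_par T v))))

theorem aux_B {V : Type*} {H : SimpleGraph V} {r : V} (T : DFSTree H r) (u₁ u₂ : V)
    (h₁ : u₁ ≠ r) (hno : ∀ u, T.Anc u₁ u → ¬ T.Anc u₂ u) (n : ℕ) :
    ∀ v, T.par^[n] v = u₁ →
      (H.deleteEdges {s(u₁, T.par u₁), s(u₂, T.par u₂)}).Reachable v u₁ := by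
  induction n with
  | zero => rintro v rfl; exact SimpleGraph.Reachable.refl _
  | succ n ih =>
    intro v hv
    by_cases hvu : v = u₁
    · subst hvu; exact SimpleGraph.Reachable.refl _
    have hvr : v ≠ r := by
      rintro rfl
      exact h₁ (hv.symm.trans (Function.iterate_fixed T.par_root _))
    have k2 := hno v ⟨_, hv⟩
    have hadj : (H.deleteEdges {s(u₁, T.par u₁), s(u₂, T.par u₂)}).Adj v (T.par v) := by
      rw [SimpleGraph.deleteEdges_adj]
      refine ⟨T.par_adj v hvr, ?_⟩
      rintro (h | h)
      · rcases Sym2.eq_iff.1 h with ⟨h, -⟩ | ⟨h, h'⟩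
        · exact hvu h
        · exact h₁ (aux_cyc T u₁ 1 (by rw [h] at h'; exact h'))
      · rcases Sym2.eq_iff.1 h with ⟨h, -⟩ | ⟨-, h⟩
        · exact k2 (h ▸ aux_refl T v)
        · exact k2 (h ▸ aux_par T v)
    exact hadj.reachable.trans (ih _ hv)

theorem aux_C {V : Type*} {H : SimpleGraph V} {r : V} (T : DFSTree H r)
    (hH : TwoEdgeConnected H) (u₁ u₂ : V)
    (h₁ : u₁ ≠ r) (hno : ∀ u, T.Anc u₁ u → ¬ T.Anc u₂ u) (v : V) (hv : T.Anc u₁ v) :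
      (H.deleteEdges {s(u₁, T.par u₁), s(u₂, T.par u₂)}).Reachable v r := by
  have hB : ∀ v, T.Anc u₁ v →
      (H.deleteEdges {s(u₁, T.par u₁), s(u₂, T.par u₂)}).Reachable v u₁ :=
    fun v ⟨n, hn⟩ => aux_B T u₁ u₂ h₁ hno n v hn
  refine (hB v hv).trans ?_
  have hadj := T.par_adj u₁ h₁
  have hb := hH.2 s(u₁, T.par u₁) hadj
  rw [SimpleGraph.isBridge_iff, not_not] at hb
  obtain ⟨w⟩ := hb
  have hpar : ¬ T.Anc u₁ (T.par u₁) := fun ⟨n, hn⟩ => h₁ (aux_cyc T u₁ n hn)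
  obtain ⟨d, -, hx, hy⟩ := w.exists_boundary_dart {x | T.Anc u₁ x} (aux_refl T u₁) hpar
  have hd := d.adj
  generalize d.fst = x at *
  generalize d.snd = y at *
  simp only [Set.mem_setOf_eq] at hx hy
  rw [SimpleGraph.deleteEdges_adj] at hd
  have hyx : T.Anc y x := by
    rcases T.edge_anc x y hd.1 with h | h
    · exact h
    · exact absurd (aux_trans T hx h) hy
  have hy2 : ¬ T.Anc u₂ y := fun h => hno x hx (aux_trans T h hyx)
  have hxy : (H.deleteEdges {s(u₁, T.par u₁), s(u₂, T.par u₂)}).Adj x y := by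
    rw [SimpleGraph.deleteEdges_adj]
    refine ⟨hd.1, ?_⟩
    rintro (h | h)
    · exact hd.2 h
    · rcases Sym2.eq_iff.1 h with ⟨h, -⟩ | ⟨-, h⟩
      · exact hno x hx (h ▸ aux_refl T x)
      · exact hy2 (h ▸ aux_refl T y)
  obtain ⟨n, hn⟩ := T.reaches_root y
  exact ((hB x hx).symm.trans hxy.reachable).trans (aux_A T u₁ u₂ n y hn hy hy2)

theorem stmt_15 {V : Type*} [Fintype V] (H : SimpleGraph V) (r : V)
    (T : DFSTree H r) (hH : TwoEdgeConnected H) (u₁ u₂ : V)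
    (h₁ : u₁ ≠ r) (h₂ : u₂ ≠ r)
    (hcut : ECutPair H s(u₁, T.par u₁) s(u₂, T.par u₂)) :
    ∃ u : V, T.Anc u₁ u ∧ T.Anc u₂ u := by
  by_contra hcon
  have hno : ∀ u, T.Anc u₁ u → ¬ T.Anc u₂ u := fun u a b => hcon ⟨u, a, b⟩
  apply hcut.2.2.2
  have hall : ∀ v, (H.deleteEdges {s(u₁, T.par u₁), s(u₂, T.par u₂)}).Reachable v r := by
    intro v
    by_cases k1 : T.Anc u₁ v
    · exact aux_C T hH u₁ u₂ h₁ hno v k1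
    by_cases k2 : T.Anc u₂ v
    · rw [Set.pair_comm]
      exact aux_C T hH u₂ u₁ h₂ (fun u a b => hno u b a) v k2
    obtain ⟨n, hn⟩ := T.reaches_root v
    exact aux_A T u₁ u₂ n v hn k1 k2
  haveI : Nonempty V := ⟨r⟩
  exact ⟨fun a b => (hall a).trans (hall b).symm⟩
end

section
/- Let H be a 2-edge-connected undirected graph with a DFS tree T rooted at r, and let u and v be vertices different from r such that M(u) = M(v), v is an ancestor of u, and high(u) is a proper ancestor of v. Then high(u) = high(v). -/
theorem DFSTree.Anc.tr {V : Type*} {H : SimpleGraph V} {r : V} {T : DFSTree H r} {a b c : V}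
    (h1 : T.Anc a b) (h2 : T.Anc b c) : T.Anc a c := by
  obtain ⟨n, rfl⟩ := h1
  obtain ⟨k, rfl⟩ := h2
  exact ⟨n + k, Function.iterate_add_apply _ _ _ _⟩

theorem DFSTree.Anc.asymm {V : Type*} {H : SimpleGraph V} {r : V} {T : DFSTree H r} {a b : V}
    (h1 : T.Anc a b) (h2 : T.Anc b a) : a = b := by
  obtain ⟨n, hn⟩ := h1
  obtain ⟨k, hk⟩ := h2
  have hr : ∀ j, T.par^[j] r = r := fun j => Function.iterate_fixed T.par_root j
  rcases Nat.eq_zero_or_pos n with h0 | h0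
  · subst h0; exact hn.symm
  have hp : Function.IsPeriodicPt T.par (k + n) b := by
    show T.par^[k + n] b = b
    rw [Function.iterate_add_apply, hn, hk]
  obtain ⟨N, hN⟩ := T.reaches_root b
  have hp2 : T.par^[(k + n) * N] b = b := hp.mul_const N
  have hle : N ≤ (k + n) * N := Nat.le_mul_of_pos_left _ (by omega)
  obtain ⟨d, hd⟩ := Nat.exists_eq_add_of_le' hle
  rw [hd, Function.iterate_add_apply, hN, hr] at hp2
  rw [← hn, ← hp2, hr]

theorem stmt_18 {V : Type*} [Fintype V] (H : SimpleGraph V) (r : V)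
    (T : DFSTree H r) (hH : TwoEdgeConnected H) (u v m hgu hgv : V)
    (hur : u ≠ r) (hvr : v ≠ r)
    (hmu : T.IsM u m) (hmv : T.IsM v m) (hanc : T.Anc v u)
    (hhgu : T.IsHigh u hgu) (hhgv : T.IsHigh v hgv)
    (hpa : T.PAnc hgu v) :
    hgu = hgv := by
  have hum : T.Anc u m := hmu.2 u fun x hx => hx.1
  obtain ⟨hu1, ⟨x, hx, hxb⟩, hu3⟩ := hhgu
  obtain ⟨hv1, ⟨y, hy, hyb⟩, hv3⟩ := hhgv
  have hmy : T.Anc m y := hmv.1 y ⟨hy, hgv, hv1, hyb⟩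
  refine (hv3 hgu hpa ⟨x, hanc.tr hx, hxb⟩).asymm
    (hu3 hgv ⟨hv1.1.tr hanc, ?_⟩ ⟨y, hum.tr hmy, hyb⟩)
  rintro rfl
  exact hv1.2 (hv1.1.asymm hanc)
end

section
/- Let H be a 2-edge-connected undirected graph with a DFS tree T rooted at r. For a vertex w ≠ r let S(w) denote the set consisting of w together with all vertices x ≠ r such that {(w,p(w)),(x,p(x))} is a cut-pair of H. Then for every vertex u ≠ r and every v ∈ S(u), it holds that S(v) = S(u). -/
theorem aux_inv {V : Type*} (G : SimpleGraph V) (c : V → Prop)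
    (h : ∀ a b, G.Adj a b → (c a ↔ c b)) {x y : V} (hr : G.Reachable x y) : c x ↔ c y := by
  obtain ⟨w⟩ := hr
  induction w with
  | nil => exact Iff.rfl
  | cons hab _ ih => exact (h _ _ hab).trans ih

theorem aux_cross {V : Type*} (H : SimpleGraph V) (hH : TwoEdgeConnected H) (c : V → Prop)
    (e f : Sym2 V) (hf : f ∈ H.edgeSet)
    (hc : ∀ a b, H.Adj a b → s(a, b) ≠ e → s(a, b) ≠ f → (c a ↔ c b))
    {x y : V} (hxy : ¬ (c x ↔ c y)) (a b : V) (hab : s(a, b) = e) : ¬ (c a ↔ c b) := by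
  intro hcab
  have h1 : ∀ p q, H.Adj p q → s(p, q) ≠ f → (c p ↔ c q) := by
    intro p q hpq hne
    by_cases hpe : s(p, q) = e
    · rw [← hab, Sym2.eq_iff] at hpe
      rcases hpe with ⟨rfl, rfl⟩ | ⟨rfl, rfl⟩
      · exact hcab
      · exact hcab.symm
    · exact hc p q hpq hpe hne
  apply hxy
  refine aux_inv H c ?_ (hH.1.preconnected x y)
  intro p q hpq
  by_cases hpf : s(p, q) = f
  · have hb := hH.2 f hf
    rw [← hpf, SimpleGraph.isBridge_iff] at hb
    have hr : (H.deleteEdges {s(p, q)}).Reachable p q := by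
      by_contra hcon
      exact hb (by simpa [SimpleGraph.deleteEdges, hpq] using hcon)
    refine aux_inv _ c ?_ hr
    intro u v huv
    rw [SimpleGraph.deleteEdges_adj] at huv
    exact h1 u v huv.1 (by rw [← hpf]; simpa using huv.2)
  · exact h1 p q hpq hpf

theorem aux_col {V : Type*} (H : SimpleGraph V) (hH : TwoEdgeConnected H)
    (e f : Sym2 V) (h : ECutPair H e f) :
    ∃ c : V → Prop, ∀ a b, H.Adj a b → (¬ (c a ↔ c b) ↔ (s(a, b) = e ∨ s(a, b) = f)) := by
  obtain ⟨he, hf, hne, hd⟩ := h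
  have : Nonempty V := hH.1.nonempty
  have hp : ¬ (H.deleteEdges {e, f}).Preconnected := fun hp => hd ⟨hp⟩
  unfold SimpleGraph.Preconnected at hp
  push Not at hp
  obtain ⟨x, y, hxy⟩ := hp
  let c : V → Prop := fun z => (H.deleteEdges {e, f}).Reachable x z
  have hc : ∀ a b, H.Adj a b → s(a, b) ≠ e → s(a, b) ≠ f → (c a ↔ c b) := by
    intro a b hab h1 h2
    have had : (H.deleteEdges {e, f}).Adj a b := by
      rw [SimpleGraph.deleteEdges_adj]
      exact ⟨hab, by simp [h1, h2]⟩
    exact ⟨fun h => h.trans had.reachable, fun h => h.trans had.symm.reachable⟩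
  have hn : ¬ (c x ↔ c y) := fun h => hxy (h.1 (SimpleGraph.Reachable.refl x))
  refine ⟨c, fun a b hab => ⟨?_, ?_⟩⟩
  · intro h
    by_contra hcon
    push Not at hcon
    exact h (hc a b hab hcon.1 hcon.2)
  · rintro (h | h)
    · exact aux_cross H hH c e f hf hc hn a b h
    · exact aux_cross H hH c f e he (fun a b hab h1 h2 => hc a b hab h2 h1) hn a b h

theorem aux_trans_s19 {V : Type*} (H : SimpleGraph V) (hH : TwoEdgeConnected H)
    (e f g : Sym2 V) (h1 : ECutPair H e f) (h2 : ECutPair H f g) (hne : e ≠ g) :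
    ECutPair H e g := by
  obtain ⟨c, hc⟩ := aux_col H hH e f h1
  obtain ⟨d, hd⟩ := aux_col H hH f g h2
  have hef := h1.2.2.1
  have hfg := h2.2.2.1
  refine ⟨h1.1, h2.2.1, hne, fun hcon => ?_⟩
  have hE := h1.1
  induction e with
  | _ a b =>
    have hab : H.Adj a b := hE
    have hinv : (c a ↔ d a) ↔ (c b ↔ d b) := by
      refine aux_inv (H.deleteEdges {s(a, b), g}) (fun z => (c z ↔ d z)) ?_
        (hcon.preconnected a b)
      intro p q hpq
      rw [SimpleGraph.deleteEdges_adj] at hpq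
      have h3 := hc p q hpq.1
      have h4 := hd p q hpq.1
      have h5 := hpq.2
      simp only [Set.mem_insert_iff, Set.mem_singleton_iff, not_or] at h5
      have := h5.1
      have := h5.2
      tauto
    have h3 := hc a b hab
    have h4 := hd a b hab
    have h6 : s(a, b) = s(a, b) := rfl
    tauto

theorem aux_symm {V : Type*} (H : SimpleGraph V) (e f : Sym2 V) (h : ECutPair H e f) :
    ECutPair H f e :=
  ⟨h.2.1, h.1, h.2.2.1.symm, by rw [Set.pair_comm]; exact h.2.2.2⟩

theorem aux_inj {V : Type*} {H : SimpleGraph V} {r : V} (T : DFSTree H r) {x y : V}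
    (hx : x ≠ r) (h : s(x, T.par x) = s(y, T.par y)) : x = y := by
  rw [Sym2.eq_iff] at h
  rcases h with h | ⟨h1, h2⟩
  · exact h.1
  · exfalso
    have hn : ∀ n : ℕ, T.par^[n] x = x ∨ T.par^[n] x = y := by
      intro n
      induction n with
      | zero => exact Or.inl rfl
      | succ n ih =>
        rw [Function.iterate_succ_apply']
        rcases ih with ih | ih <;> rw [ih]
        · exact Or.inr h2
        · exact Or.inl h1.symm
    obtain ⟨n, hr⟩ := T.reaches_root x
    rcases hn n with h | h
    · exact hx (h.symm.trans hr)
    · have hy : y = r := h.symm.trans hr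
      rw [hy, T.par_root] at h1
      exact hx h1

theorem aux_sub {V : Type*} (H : SimpleGraph V) (r : V)
    (T : DFSTree H r) (hH : TwoEdgeConnected H) (u v x : V) (hu : u ≠ r)
    (huv : ECutPair H s(u, T.par u) s(v, T.par v))
    (hx : x = v ∨ (x ≠ r ∧ ECutPair H s(v, T.par v) s(x, T.par x))) (hv : v ≠ r) :
    x = u ∨ (x ≠ r ∧ ECutPair H s(u, T.par u) s(x, T.par x)) := by
  by_cases hxu : x = u
  · exact Or.inl hxu
  · right
    rcases hx with rfl | ⟨hxr, hx⟩
    · exact ⟨hv, huv⟩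
    · exact ⟨hxr, aux_trans_s19 H hH _ _ _ huv hx (fun h => hxu (aux_inj T hu h).symm)⟩

theorem stmt_19 {V : Type*} [Fintype V] (H : SimpleGraph V) (r : V)
    (T : DFSTree H r) (hH : TwoEdgeConnected H)
    (S : V → Set V)
    (hS : ∀ w : V, S w =
      {w} ∪ {x : V | x ≠ r ∧ ECutPair H s(w, T.par w) s(x, T.par x)}) :
    ∀ u : V, u ≠ r → ∀ v ∈ S u, S v = S u := by
  intro u hu v hv
  rw [hS u] at hv
  rcases hv with hv | ⟨hvr, huv⟩
  · rw [Set.mem_singleton_iff.1 hv]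
  · rw [hS u, hS v]
    ext x
    exact ⟨fun hx => aux_sub H r T hH u v x hu huv hx hvr,
      fun hx => aux_sub H r T hH v u x hvr (aux_symm H _ _ huv) hx hu⟩
end
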